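/- Let α ≤ β ≤ −1 be negative integers, let M = (M_i)_{i≥0} be real parameters with M_i ∉ {0,1}, and let F be a finite set of positive integers with {−β, …, −α−β−1} ⊆ F. Then for every n ∈ σ_F, lim_{N→+∞} h_n^{α,β,N;M,F}((1−x)N/2) / N^n = υ_n^F · P_n^{α,β;M,F}(x), uniformly on compact subsets of ℂ, where υ_n^F = (−1)^n · 2^{C(n_F+1,2)} · (n−u_F)! · ∏_{f∈F} f!. -/

import Mathlib

open Finset

noncomputable section ExceptionalHahnJacobiComplex

/-- Pochhammer symbol `(z)_m = z (z+1) ⋯ (z+m-1)` (complex variable). -/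
def pochC (z : ℂ) (m : ℕ) : ℂ := ∏ i ∈ Finset.range m, (z + (i : ℂ))

/-- Generalized binomial coefficient `C(z, k)` (complex variable). -/
def genBinomC (z : ℂ) (k : ℕ) : ℂ := (∏ i ∈ Finset.range k, (z - (i : ℂ))) / (k.factorial : ℂ)

/-- Hahn polynomial `h_n^{a,b,N}(x)` (complex variable). -/
def hahnC (a b N : ℂ) (n : ℕ) (x : ℂ) : ℂ :=
  ∑ j ∈ Finset.range (n + 1),
    pochC (-(n : ℂ)) j * pochC (a + b + (n : ℂ) + 1) j * pochC (-N + (j : ℂ)) (n - j) *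
      pochC (a + (j : ℂ) + 1) (n - j) * pochC (-x) j / (j.factorial : ℂ)

/-- Jacobi polynomial `P_n^{a,b}(x)` (complex variable). -/
def jacobiC (a b : ℂ) (n : ℕ) (x : ℂ) : ℂ :=
  (2 : ℂ)⁻¹ ^ n * ∑ j ∈ Finset.range (n + 1),
    genBinomC ((n : ℂ) + a) j * genBinomC ((n : ℂ) + b) (n - j) * (x - 1) ^ (n - j) * (x + 1) ^ j

/-- The function `φ_u^{α,β,N}(s,x)` (complex variables). -/
def phiHC (α β : ℤ) (N : ℂ) (u : ℕ) (s x : ℂ) : ℂ :=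
  pochC ((α : ℂ) + 1) (max u (-α - β - (u : ℤ) - 1).toNat) *
    pochC (-N) (max u (-α - β - (u : ℤ) - 1).toNat) *
    ∑ j ∈ Finset.range (u + 1),
      pochC (-(u : ℂ)) j * pochC ((u : ℂ) - s + (α : ℂ) + (β : ℂ) + 1) j * pochC (-x) j /
        (pochC ((α : ℂ) - s + 1) j * pochC (-N) j * (j.factorial : ℂ))

/-- The polynomials `Ĥ_n^{α,β,N;M}(x)` (complex variable). -/
def HhatC (α β : ℤ) (N : ℂ) (M : ℕ → ℝ) (n : ℕ) (x : ℂ) : ℂ :=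
  if ⌈((-α - β : ℤ) : ℚ) / 2⌉ ≤ (n : ℤ) ∧ (n : ℤ) ≤ -α - 1 then
    deriv (fun s : ℂ => phiHC α β N n s x) 0 -
      deriv (fun s : ℂ => phiHC α β N (-α - β - (n : ℤ) - 1).toNat s x) 0
  else if -α ≤ (n : ℤ) ∧ (n : ℤ) ≤ -α - β - 1 then
    (-1 : ℂ) ^ ((β : ℤ) + (n : ℤ)) * ((β + (n : ℤ)).toNat.factorial : ℂ) *
      (((-α - β - (n : ℤ) - 1).toNat.factorial : ℂ) * pochC (-x) (-α).toNat *
          hahnC (-(α : ℂ)) (β : ℂ) ((α : ℂ) + N) ((α + (n : ℤ)).toNat) (x + (α : ℂ)) +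
        (((α + (n : ℤ)).toNat.factorial : ℂ)) *
            pochC (-N - (α : ℂ) - (β : ℂ) - (n : ℂ) - 1) (2 * (n : ℤ) + α + β + 1).toNat /
            ((M ((α + (n : ℤ)).toNat) : ℂ) - 1) *
          hahnC (α : ℂ) (β : ℂ) N ((-α - β - (n : ℤ) - 1).toNat) x)
  else hahnC (α : ℂ) (β : ℂ) N n x

/-- The function `φ_u^{α,β}(s,x)` (complex variables). -/
def phiJC (α β : ℤ) (u : ℕ) (s x : ℂ) : ℂ :=
  pochC ((α : ℂ) + 1) (max u (-α - β - (u : ℤ) - 1).toNat) /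
      ((max u.factorial (-α - β - (u : ℤ) - 1).toNat.factorial : ℕ) : ℂ) *
    ∑ j ∈ Finset.range (u + 1),
      pochC (-(u : ℂ)) j * pochC ((u : ℂ) - s + (α : ℂ) + (β : ℂ) + 1) j /
          (pochC ((α : ℂ) - s + 1) j * (j.factorial : ℂ)) * ((1 - x) / 2) ^ j

/-- The polynomials `P̂_n^{α,β;M}(x)` (complex variable). -/
def PhatC (α β : ℤ) (M : ℕ → ℝ) (n : ℕ) (x : ℂ) : ℂ :=
  if ⌈((-α - β : ℤ) : ℚ) / 2⌉ ≤ (n : ℤ) ∧ (n : ℤ) ≤ -α - 1 then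
    deriv (fun s : ℂ => phiJC α β n s x) 0 -
      deriv (fun s : ℂ => phiJC α β (-α - β - (n : ℤ) - 1).toNat s x) 0
  else if -α ≤ (n : ℤ) ∧ (n : ℤ) ≤ -α - β - 1 then
    (-1 : ℂ) ^ ((β : ℤ) + (n : ℤ)) *
      ((((n : ℤ) + α).toNat.factorial : ℂ) * (((n : ℤ) + β).toNat.factorial : ℂ) *
        ((-α - β - (n : ℤ) - 1).toNat.factorial : ℂ)) / (n.factorial : ℂ) *
      (((M ((α + (n : ℤ)).toNat) : ℂ) - 1)⁻¹ *
          jacobiC (α : ℂ) (β : ℂ) ((-α - β - (n : ℤ) - 1).toNat) x +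
        ((1 - x) / 2) ^ (-α).toNat * jacobiC (-(α : ℂ)) (β : ℂ) ((α + (n : ℤ)).toNat) x)
  else jacobiC (α : ℂ) (β : ℂ) n x

/-- `u_F = Σ_{f ∈ F} f - C(n_F + 1, 2)`. -/
def uF (F : Finset ℕ) : ℕ := (∑ f ∈ F, f) - (F.card + 1).choose 2

/-- `n ∈ σ_F = {u_F, u_F + 1, …} \ {u_F + f : f ∈ F}`. -/
def inSigma (F : Finset ℕ) (n : ℕ) : Prop := uF F ≤ n ∧ n - uF F ∉ F

/-- The `i`-th element of `F` in increasing order. -/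
def elemOf (F : Finset ℕ) (i : Fin F.card) : ℕ := ((F.orderIsoOfFin rfl i : {x // x ∈ F}) : ℕ)

/-- Exceptional Hahn polynomial `h_n^{α,β,N;M,F}(x)` (complex variable). -/
def exHahnC (α β : ℤ) (N : ℂ) (M : ℕ → ℝ) (F : Finset ℕ) (n : ℕ) (x : ℂ) : ℂ :=
  Matrix.det (Matrix.of fun i j : Fin (F.card + 1) =>
    Fin.cases (HhatC α β N M (n - uF F) (x + ((j : ℕ) : ℂ)))
      (fun k => HhatC α β N M (elemOf F k) (x + ((j : ℕ) : ℂ))) i)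

/-- Exceptional Jacobi polynomial `P_n^{α,β;M,F}(x)` (complex variable). -/
def exJacobiC (α β : ℤ) (M : ℕ → ℝ) (F : Finset ℕ) (n : ℕ) (x : ℂ) : ℂ :=
  Matrix.det (Matrix.of fun i j : Fin (F.card + 1) =>
    Fin.cases (iteratedDeriv (j : ℕ) (PhatC α β M (n - uF F)) x)
      (fun k => iteratedDeriv (j : ℕ) (PhatC α β M (elemOf F k)) x) i)

end ExceptionalHahnJacobiComplex

open Filter Topology

/-- continuous convergence -/
noncomputable def CC (G : ℝ → ℂ → ℂ) (g : ℂ → ℂ) : Prop :=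
  ∀ x, Tendsto (fun p : ℝ × ℂ => G p.1 p.2) (atTop ×ˢ 𝓝 x) (𝓝 (g x))

lemma CC.dist_le {G : ℝ → ℂ → ℂ} {g : ℂ → ℂ} (h : CC G g) (x : ℂ) (ε : ℝ) (hε : 0 < ε) :
    ∃ t ∈ 𝓝 x, (∀ y ∈ t, dist (g y) (g x) ≤ ε) ∧
      ∀ᶠ N in atTop, ∀ y ∈ t, dist (G N y) (g x) < ε := by
  have h1 := h x (Metric.ball_mem_nhds _ hε)
  rw [Filter.mem_map, Filter.mem_prod_iff] at h1
  obtain ⟨A, hA, B, hB, hAB⟩ := h1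
  have h2 : ∀ᶠ N in atTop, ∀ y ∈ B, dist (G N y) (g x) < ε := by
    filter_upwards [hA] with N hN y hy
    exact hAB (Set.mk_mem_prod hN hy)
  refine ⟨B, hB, fun y hy => ?_, h2⟩
  have h3 : Tendsto (fun N => G N y) atTop (𝓝 (g y)) :=
    (h y).comp (tendsto_id.prodMk tendsto_const_nhds)
  refine le_of_tendsto (h3.dist tendsto_const_nhds) ?_
  filter_upwards [h2] with N hN
  exact (hN y hy).le

lemma CC.tlu {G : ℝ → ℂ → ℂ} {g : ℂ → ℂ} (h : CC G g) : TendstoLocallyUniformly G g atTop := by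
  rw [Metric.tendstoLocallyUniformly_iff]
  intro ε hε x
  obtain ⟨t, ht, h1, h2⟩ := h.dist_le x (ε / 2) (by positivity)
  refine ⟨t, ht, ?_⟩
  filter_upwards [h2] with N hN y hy
  have := dist_triangle_right (g y) (G N y) (g x)
  linarith [h1 y hy, hN y hy]

lemma CC.of_tlu {G : ℝ → ℂ → ℂ} {g : ℂ → ℂ} (h : TendstoLocallyUniformly G g atTop)
    (hg : Continuous g) : CC G g := by
  intro x
  rw [Metric.tendsto_nhds]
  intro ε hε
  rw [Metric.tendstoLocallyUniformly_iff] at h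
  obtain ⟨t, ht, h1⟩ := h (ε / 2) (by positivity) x
  have h2 := (Metric.tendsto_nhds.1 (hg.tendsto x)) (ε / 2) (by positivity)
  filter_upwards [prod_mem_prod h1 (inter_mem ht h2)] with p hp
  have a := hp.1 p.2 hp.2.1
  have b : dist (g p.2) (g x) < ε / 2 := hp.2.2
  have := dist_triangle_left (G p.1 p.2) (g x) (g p.2)
  linarith

lemma CC.unif {G : ℝ → ℂ → ℂ} {g : ℂ → ℂ} (h : CC G g) {K : Set ℂ} (hK : IsCompact K) :
    TendstoUniformlyOn G g atTop K :=
  (tendstoLocallyUniformlyOn_iff_tendstoUniformlyOn_of_compact hK).1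
    h.tlu.tendstoLocallyUniformlyOn

lemma CC.congr' {G G' : ℝ → ℂ → ℂ} {g g' : ℂ → ℂ} (h : CC G g)
    (h1 : ∀ N : ℝ, 0 < N → ∀ x, G N x = G' N x) (h2 : ∀ x, g x = g' x) : CC G' g' := by
  intro x
  rw [← h2]
  refine (h x).congr' ?_
  have : ∀ᶠ p : ℝ × ℂ in atTop ×ˢ 𝓝 x, 0 < p.1 := tendsto_fst.eventually (eventually_gt_atTop 0)
  filter_upwards [this] with p hp
  exact h1 _ hp _

lemma CC.add {G G' : ℝ → ℂ → ℂ} {g g' : ℂ → ℂ} (h : CC G g) (h' : CC G' g') :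
    CC (fun N x => G N x + G' N x) (fun x => g x + g' x) := fun x => (h x).add (h' x)

lemma CC.sub {G G' : ℝ → ℂ → ℂ} {g g' : ℂ → ℂ} (h : CC G g) (h' : CC G' g') :
    CC (fun N x => G N x - G' N x) (fun x => g x - g' x) := fun x => (h x).sub (h' x)

lemma CC.mul {G G' : ℝ → ℂ → ℂ} {g g' : ℂ → ℂ} (h : CC G g) (h' : CC G' g') :
    CC (fun N x => G N x * G' N x) (fun x => g x * g' x) := fun x => (h x).mul (h' x)

lemma CC.div {G G' : ℝ → ℂ → ℂ} {g g' : ℂ → ℂ} (h : CC G g) (h' : CC G' g')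
    (h0 : ∀ x, g' x ≠ 0) :
    CC (fun N x => G N x / G' N x) (fun x => g x / g' x) := fun x => (h x).div (h' x) (h0 x)

lemma CC.const (c : ℂ) : CC (fun _ _ => c) (fun _ => c) := fun _ => tendsto_const_nhds

lemma CC.sum {ι : Type*} (s : Finset ι) {G : ι → ℝ → ℂ → ℂ} {g : ι → ℂ → ℂ}
    (h : ∀ i ∈ s, CC (G i) (g i)) :
    CC (fun N x => ∑ i ∈ s, G i N x) (fun x => ∑ i ∈ s, g i x) :=
  fun x => tendsto_finsetSum s fun i hi => h i hi x

lemma CC.prod {ι : Type*} (s : Finset ι) {G : ι → ℝ → ℂ → ℂ} {g : ι → ℂ → ℂ}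
    (h : ∀ i ∈ s, CC (G i) (g i)) :
    CC (fun N x => ∏ i ∈ s, G i N x) (fun x => ∏ i ∈ s, g i x) :=
  fun x => tendsto_finsetProd s fun i hi => h i hi x

lemma CC.det {m : ℕ} {G : Fin m → Fin m → ℝ → ℂ → ℂ} {g : Fin m → Fin m → ℂ → ℂ}
    (h : ∀ i j, CC (G i j) (g i j)) :
    CC (fun N x => Matrix.det (Matrix.of fun i j => G i j N x))
      (fun x => Matrix.det (Matrix.of fun i j => g i j x)) := by
  simp only [Matrix.det_apply']
  exact CC.sum _ fun σ _ => (CC.const _).mul (CC.prod _ fun i _ => h _ _)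

lemma CC.cinv (c : ℂ) : CC (fun N _ => c / (N : ℂ)) (fun _ => 0) := by
  intro x
  have h : Tendsto (fun N : ℝ => c / (N : ℂ)) atTop (𝓝 0) := by
    have : Tendsto (fun N : ℝ => ((N⁻¹ : ℝ) : ℂ)) atTop (𝓝 ((0 : ℝ) : ℂ)) :=
      (Complex.continuous_ofReal.tendsto 0).comp tendsto_inv_atTop_zero
    have := this.const_mul c
    simpa [div_eq_mul_inv] using this
  exact h.comp tendsto_fst

lemma CC.fn {g : ℂ → ℂ} (hg : Continuous g) : CC (fun _ => g) g :=
  fun x => (hg.tendsto x).comp tendsto_snd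

/-- scaled difference -/
noncomputable def TT (N : ℝ) (f : ℂ → ℂ) : ℂ → ℂ := fun x => (N : ℂ) * (f (x + (-2 / (N : ℂ))) - f x)

lemma CC.TT {G : ℝ → ℂ → ℂ} {g : ℂ → ℂ} (hd : ∀ N, Differentiable ℂ (G N)) (h : CC G g) :
    CC (fun N => TT N (G N)) (fun x => -2 * deriv g x) := by
  have htlu : TendstoLocallyUniformlyOn G g atTop Set.univ :=
    h.tlu.tendstoLocallyUniformlyOn
  have hgd : DifferentiableOn ℂ g Set.univ :=
    htlu.differentiableOn (Eventually.of_forall fun N => (hd N).differentiableOn) isOpen_univ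
  have hgd' : Differentiable ℂ g := differentiableOn_univ.1 hgd
  have hder := htlu.deriv (Eventually.of_forall fun N => (hd N).differentiableOn) isOpen_univ
  have hc : Continuous (deriv g) := (hgd'.contDiff (n := 2)).continuous_deriv (by norm_num)
  have hCC : CC (fun N => deriv (G N)) (deriv g) :=
    CC.of_tlu (tendstoLocallyUniformlyOn_univ.1 hder) hc
  intro x0
  rw [Metric.tendsto_nhds]
  intro ε hε
  obtain ⟨t, ht, -, h1⟩ := hCC.dist_le x0 (ε / 4) (by positivity)
  obtain ⟨r, hr, hrt⟩ := Metric.mem_nhds_iff.1 ht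
  have e1 : ∀ᶠ p : ℝ × ℂ in atTop ×ˢ 𝓝 x0, ∀ y ∈ t, dist (deriv (G p.1) y) (deriv g x0) < ε / 4 :=
    tendsto_fst.eventually h1
  have e2 : ∀ᶠ p : ℝ × ℂ in atTop ×ˢ 𝓝 x0, 0 < p.1 :=
    tendsto_fst.eventually (eventually_gt_atTop 0)
  have e3 : ∀ᶠ p : ℝ × ℂ in atTop ×ˢ 𝓝 x0, p.2 ∈ Metric.ball x0 r :=
    tendsto_snd.eventually (Metric.ball_mem_nhds _ hr)
  have e4 : ∀ᶠ p : ℝ × ℂ in atTop ×ˢ 𝓝 x0, p.2 + (-2 / (p.1 : ℂ)) ∈ Metric.ball x0 r := by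
    have := (tendsto_snd (f := (atTop : Filter ℝ)) (g := 𝓝 x0)).add (CC.cinv (-2) x0)
    rw [add_zero] at this
    exact this (Metric.ball_mem_nhds _ hr)
  filter_upwards [e1, e2, e3, e4] with p h1 h2 h3 h4
  obtain ⟨N, x⟩ := p
  simp only at h1 h2 h3 h4 ⊢
  have key := (convex_ball x0 r).norm_image_sub_le_of_norm_hasDerivWithin_le
    (f := fun y => G N y - deriv g x0 * y) (f' := fun y => deriv (G N) y - deriv g x0)
    (C := ε / 4) (x := x) (y := x + (-2 / (N : ℂ)))
    (fun y _ => by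
      have a := ((hd N) y).hasDerivAt.sub ((hasDerivAt_id y).const_mul (deriv g x0))
      simp only [mul_one] at a
      exact a.hasDerivWithinAt)
    (fun y hy => by
      have := h1 y (hrt hy)
      rw [dist_eq_norm] at this
      exact this.le) h3 h4
  have hN : (N : ℂ) ≠ 0 := by exact_mod_cast h2.ne'
  have e : _root_.TT N (G N) x - -2 * deriv g x0 =
      N * ((G N (x + (-2 / (N : ℂ))) - deriv g x0 * (x + (-2 / (N : ℂ)))) -
        (G N x - deriv g x0 * x)) := by
    simp only [_root_.TT]
    field_simp
    ring
  rw [dist_eq_norm, e, norm_mul]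
  have e5 : ‖x + -2 / (N : ℂ) - x‖ = 2 / N := by
    rw [add_sub_cancel_left, norm_div, norm_neg]; simp [abs_of_pos h2]
  rw [e5] at key
  have e6 : ‖(N : ℂ)‖ = N := by simp [abs_of_pos h2]
  rw [e6]
  calc _ ≤ N * (ε / 4 * (2 / N)) := by gcongr
    _ = ε / 2 := by field_simp; ring
    _ < ε := by linarith

lemma TT_diff (N : ℝ) {f : ℂ → ℂ} (hf : Differentiable ℂ f) : Differentiable ℂ (TT N f) := by
  unfold TT; fun_prop

lemma CC.TT_iter {G : ℝ → ℂ → ℂ} {g : ℂ → ℂ} (hd : ∀ N, Differentiable ℂ (G N)) (h : CC G g)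
    (k : ℕ) : (∀ N, Differentiable ℂ ((_root_.TT N)^[k] (G N))) ∧
    CC (fun N => (_root_.TT N)^[k] (G N)) (fun x => (-2) ^ k * iteratedDeriv k g x) := by
  induction k with
  | zero => exact ⟨by simpa using hd, by simpa using h⟩
  | succ k ih =>
    constructor
    · intro N; rw [Function.iterate_succ_apply']; exact TT_diff N (ih.1 N)
    · have := CC.TT ih.1 ih.2
      refine this.congr' (fun N _ x => by rw [Function.iterate_succ_apply']) (fun x => ?_)
      rw [deriv_const_mul_field, iteratedDeriv_succ]; ring

lemma TT_iter_eq (N : ℝ) (f : ℂ → ℂ) (k : ℕ) :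
    (TT N)^[k] f = fun x => (N : ℂ) ^ k * (fwdDiff (-2 / (N : ℂ)))^[k] f x := by
  induction k with
  | zero => simp
  | succ k ih =>
    rw [Function.iterate_succ_apply', Function.iterate_succ_apply', ih]
    funext x
    simp only [TT, fwdDiff]
    ring

/-- determinant of shifts -/
lemma det_shift (m : ℕ) (N : ℝ) (hN : 0 < N) (G : Fin m → ℂ → ℂ) (H : Fin m → ℂ → ℂ) (f : Fin m → ℕ)
    (hG : ∀ i x, H i ((1 - x) * (N : ℂ) / 2) = (N : ℂ) ^ (f i) * G i x) (x : ℂ) :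
    Matrix.det (Matrix.of fun i j : Fin m => H i ((1 - x) * (N : ℂ) / 2 + ((j : ℕ) : ℂ))) *
      ∏ j : Fin m, (N : ℂ) ^ (j : ℕ) =
    (∏ i, (N : ℂ) ^ (f i)) *
      Matrix.det (Matrix.of fun i j : Fin m => (TT N)^[(j : ℕ)] (G i) x) := by
  have hN : (N : ℂ) ≠ 0 := by exact_mod_cast hN.ne'
  set U : Matrix (Fin m) (Fin m) ℂ := Matrix.of fun k j => ((j : ℕ).choose (k : ℕ) : ℂ) with hU
  have hUdet : U.det = 1 := by
    rw [Matrix.det_of_isUpperTriangular]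
    · simp [hU]
    · intro i j hij
      simp only [hU, Matrix.of_apply]
      exact_mod_cast Nat.choose_eq_zero_of_lt hij
  have hA : (Matrix.of fun i j : Fin m => H i ((1 - x) * (N : ℂ) / 2 + ((j : ℕ) : ℂ))) =
      (Matrix.of fun i j : Fin m => (N : ℂ) ^ (f i) *
        (Matrix.of fun i j : Fin m => (fwdDiff (-2 / (N : ℂ)))^[(j : ℕ)] (G i) x) i j) * U := by
    ext i j
    have e : (1 - x) * (N : ℂ) / 2 + ((j : ℕ) : ℂ) =
        (1 - (x + (j : ℕ) • (-2 / (N : ℂ)))) * (N : ℂ) / 2 := by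
      simp only [nsmul_eq_mul]; field_simp; ring
    simp only [Matrix.of_apply, Matrix.mul_apply, hU]
    rw [e, hG, shift_eq_sum_fwdDiff_iter _ (G i), Finset.mul_sum]
    rw [Fin.sum_univ_eq_sum_range
      (fun k => (N : ℂ) ^ f i * (fwdDiff (-2 / (N : ℂ)))^[k] (G i) x * ((j : ℕ).choose k : ℂ)) m]
    refine Eq.trans ?_ (Finset.sum_subset (s₁ := Finset.range ((j : ℕ) + 1)) ?_ ?_)
    · refine Finset.sum_congr rfl fun k _ => ?_
      rw [nsmul_eq_mul]; ring
    · intro k hk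
      have := j.2
      simp at hk ⊢; omega
    · intro k _ hk
      have : (j : ℕ) < k := by simp at hk; omega
      simp [Nat.choose_eq_zero_of_lt this]
  rw [hA, Matrix.det_mul, hUdet, mul_one, Matrix.det_mul_column, mul_assoc,
    mul_comm (Matrix.det _), ← Matrix.det_mul_row]
  congr 2
  ext i j
  simp [TT_iter_eq]

lemma gb_eq (z : ℂ) (k : ℕ) : genBinomC z k = Ring.choose z k := by
  rw [Ring.choose_eq_smul, genBinomC, smul_eq_mul, div_eq_inv_mul]
  congr 1
  induction k with
  | zero => simp
  | succ k ih =>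
    rw [Finset.prod_range_succ, ih, descPochhammer_succ_right, Polynomial.smeval_mul]
    simp [Polynomial.smeval_sub, Polynomial.smeval_natCast]

lemma poch_gb (z : ℂ) (k : ℕ) : pochC (z - k + 1) k = k.factorial * genBinomC z k := by
  have : (k.factorial : ℂ) ≠ 0 := by exact_mod_cast k.factorial_ne_zero
  rw [genBinomC, mul_div_cancel₀ _ this, pochC, ← Finset.prod_range_reflect]
  refine Finset.prod_congr rfl fun i hi => ?_
  have hi : i + 1 ≤ k := by simpa using hi
  rw [show k - 1 - i = k - (i + 1) by omega, Nat.cast_sub hi]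
  push_cast; ring

lemma poch_neg (n k : ℕ) (h : k ≤ n) :
    pochC (-(n : ℂ)) k = (-1) ^ k * n.factorial / (n - k).factorial := by
  have hne : ((n - k).factorial : ℂ) ≠ 0 := by exact_mod_cast (n - k).factorial_ne_zero
  rw [eq_div_iff hne]
  induction k with
  | zero => simp [pochC]
  | succ k ih =>
    have h1 : n - k = (n - (k + 1)) + 1 := by omega
    have := ih (by omega) (by exact_mod_cast (n - k).factorial_ne_zero)
    rw [h1, Nat.factorial_succ, ← h1] at this
    rw [pochC, Finset.prod_range_succ, ← pochC]
    push_cast [Nat.cast_sub (show k ≤ n by omega)] at this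
    rw [pow_succ]
    linear_combination (-1) * this

lemma jac (a b : ℂ) (n : ℕ) (x : ℂ) : (n.factorial : ℂ) * jacobiC a b n x =
    ∑ k ∈ Finset.range (n + 1), pochC (-(n : ℂ)) k * pochC (a + b + (n : ℂ) + 1) k *
      pochC (a + (k : ℂ) + 1) (n - k) * ((1 - x) / 2) ^ k / (k.factorial : ℂ) := by
  obtain ⟨y, hy⟩ : ∃ y, y = (x - 1) / 2 := ⟨_, rfl⟩
  have hx : x = 2 * y + 1 := by rw [hy]; ring
  subst hx
  have e1 : jacobiC a b n (2 * y + 1) = ∑ s ∈ Finset.range (n + 1),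
      genBinomC (n + a) (n - s) * genBinomC (n + b) s * (y ^ s * (y + 1) ^ (n - s)) := by
    rw [jacobiC, ← Finset.sum_range_reflect, Finset.mul_sum]
    refine Finset.sum_congr rfl fun s hs => ?_
    have hs : s ≤ n := by simp at hs; omega
    rw [show n + 1 - 1 - s = n - s by omega, show n - (n - s) = s by omega]
    rw [show (2 * y + 1 - 1) = 2 * y by ring, show 2 * y + 1 + 1 = 2 * (y + 1) by ring,
      mul_pow, mul_pow]
    have : (2 : ℂ)⁻¹ ^ n * (2 ^ s * 2 ^ (n - s)) = 1 := by
      rw [← pow_add, show s + (n - s) = n by omega, ← mul_pow]; norm_num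
    linear_combination (genBinomC (n + a) (n - s) * genBinomC (n + b) s *
      (y ^ s * (y + 1) ^ (n - s))) * this
  have e2 : ∀ s ∈ Finset.range (n + 1), y ^ s * (y + 1) ^ (n - s) =
      ∑ k ∈ Finset.Ico s (n + 1), ((n - s).choose (k - s) : ℂ) * y ^ k := by
    intro s hs
    have hs : s ≤ n := by simp at hs; omega
    rw [Finset.sum_Ico_eq_sum_range, add_pow, Finset.mul_sum,
      show n + 1 - s = n - s + 1 by omega]
    refine Finset.sum_congr rfl fun m _ => ?_
    rw [show s + m - s = m by omega, one_pow, pow_add]; ring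
  have e3 : jacobiC a b n (2 * y + 1) = ∑ k ∈ Finset.range (n + 1),
      ∑ s ∈ Finset.range (k + 1), genBinomC (n + a) (n - s) * genBinomC (n + b) s *
        (((n - s).choose (k - s) : ℂ) * y ^ k) := by
    rw [e1, Finset.sum_congr rfl fun s hs => by rw [e2 s hs, Finset.mul_sum]]
    refine Finset.sum_comm' fun s k => ?_
    simp; omega
  rw [e3, Finset.mul_sum]
  refine Finset.sum_congr rfl fun k hk => ?_
  have hk : k ≤ n := by simp at hk; omega
  have e4 : ∑ s ∈ Finset.range (k + 1), genBinomC (n + a) (n - s) * genBinomC (n + b) s *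
        (((n - s).choose (k - s) : ℂ) * y ^ k) =
      genBinomC (n + a) (n - k) * genBinomC (a + b + n + k) k * y ^ k := by
    rw [show a + b + n + k = (n + b) + (a + k) by ring, gb_eq (_ + _ + (_ + _)),
      Ring.add_choose_eq k (Commute.all _ _),
      Finset.Nat.sum_antidiagonal_eq_sum_range_succ
        (fun i j => Ring.choose ((n : ℂ) + b) i * Ring.choose (a + (k : ℂ)) j),
      Finset.mul_sum, Finset.sum_mul]
    refine Finset.sum_congr rfl fun s hs => ?_
    have hs : s ≤ k := by simp at hs; omega
    have := Ring.choose_smul_choose ((n : ℂ) + a) (show n - k ≤ n - s by omega)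
    rw [show n - s - (n - k) = k - s by omega, Nat.cast_sub hk,
      show (n : ℂ) + a - (n - k) = a + k by ring,
      show (n - s).choose (n - k) = (n - s).choose (k - s) by
        rw [← Nat.choose_symm (show k - s ≤ n - s by omega)]; congr 1; omega,
      nsmul_eq_mul] at this
    simp only [gb_eq]
    linear_combination (Ring.choose ((n : ℂ) + b) s * y ^ k) * this
  rw [e4]
  have f1 := poch_gb (a + b + n + k) k
  rw [show a + b + n + k - k + 1 = a + b + n + 1 by ring] at f1
  have f2 := poch_gb (n + a) (n - k)
  rw [Nat.cast_sub hk, show (n : ℂ) + a - (n - k) + 1 = a + k + 1 by ring] at f2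
  rw [f1, f2, poch_neg n k hk, show (1 - (2 * y + 1)) / 2 = (-1) * y by ring, mul_pow]
  have h1 : ((n - k).factorial : ℂ) ≠ 0 := by exact_mod_cast (n - k).factorial_ne_zero
  have h2 : (k.factorial : ℂ) ≠ 0 := by exact_mod_cast k.factorial_ne_zero
  have h3 : ((-1 : ℂ) ^ k) * (-1) ^ k = 1 := by rw [← mul_pow]; norm_num
  field_simp
  linear_combination (-(n.factorial * y ^ k * genBinomC (n + a) (n - k) * genBinomC (a + b + n + k) k)) * h3

lemma CC.poch {A : ℝ → ℂ → ℂ} {a : ℂ → ℂ} (h : CC (fun N x => A N x / (N : ℂ)) a) (j : ℕ) :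
    CC (fun N x => pochC (A N x) j / (N : ℂ) ^ j) (fun x => a x ^ j) := by
  have := CC.prod (Finset.range j) (fun i _ => h.add (CC.cinv (i : ℂ)))
  refine this.congr' (fun N hN x => ?_) (fun x => by simp)
  rw [pochC, ← Finset.card_range j, ← Finset.prod_const, Finset.card_range,
    ← Finset.prod_div_distrib]
  exact Finset.prod_congr rfl fun i _ => by ring

lemma CC.hahn (a b : ℂ) (n : ℕ) {A X : ℝ → ℂ → ℂ}
    (hA : CC (fun N x => A N x / (N : ℂ)) (fun _ => 1))
    (hX : CC (fun N x => X N x / (N : ℂ)) (fun x => (1 - x) / 2)) :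
    CC (fun N x => hahnC a b (A N x) n (X N x) / (N : ℂ) ^ n)
      (fun x => (-1) ^ n * n.factorial * jacobiC a b n x) := by
  have hA' : ∀ c : ℂ, CC (fun N x => (-A N x + c) / (N : ℂ)) (fun _ => -1) := fun c =>
    (((CC.const (-1)).mul hA).add (CC.cinv c)).congr' (fun N _ x => by ring) (fun x => by ring)
  have hX' : CC (fun N x => (-X N x) / (N : ℂ)) (fun x => -((1 - x) / 2)) :=
    ((CC.const (-1)).mul hX).congr' (fun N _ x => by ring) (fun x => by ring)
  have := CC.sum (Finset.range (n + 1)) (fun j _ => (((CC.const (pochC (-(n : ℂ)) j *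
    pochC (a + b + (n : ℂ) + 1) j)).mul ((hA' j).poch (n - j))).mul
      (CC.const (pochC (a + (j : ℂ) + 1) (n - j)))).mul
      ((hX'.poch j).mul (CC.const ((j.factorial : ℂ)⁻¹))))
  refine this.congr' (fun N hN x => ?_) (fun x => ?_)
  · have hN : (N : ℂ) ≠ 0 := by exact_mod_cast hN.ne'
    rw [hahnC, Finset.sum_div]
    refine Finset.sum_congr rfl fun j hj => ?_
    have hj : j ≤ n := by simp at hj; omega
    have : (N : ℂ) ^ n = N ^ (n - j) * N ^ j := by rw [← pow_add]; congr 1; omega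
    rw [this]
    simp only [div_eq_mul_inv, mul_inv]
    ring
  · rw [mul_assoc, jac, Finset.mul_sum]
    refine Finset.sum_congr rfl fun j hj => ?_
    have hj : j ≤ n := by simp at hj; omega
    have : (-1 : ℂ) ^ n = (-1) ^ (n - j) * (-1) ^ j := by rw [← pow_add]; congr 1; omega
    rw [this, neg_pow ((1 - x) / 2) j]
    ring

noncomputable def dj (α β : ℤ) (u j : ℕ) : ℂ :=
  deriv (fun s : ℂ => pochC ((u : ℂ) - s + (α : ℂ) + (β : ℂ) + 1) j / pochC ((α : ℂ) - s + 1) j) 0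

lemma poch_diff (z : ℂ → ℂ) (hz : Differentiable ℂ z) (j : ℕ) :
    Differentiable ℂ (fun s => pochC (z s) j) := by
  unfold pochC; fun_prop

lemma q_diff (α β : ℤ) (u j : ℕ) (hu : (u : ℤ) ≤ -α - 1) (hj : j ≤ u) :
    DifferentiableAt ℂ (fun s : ℂ => pochC ((u : ℂ) - s + (α : ℂ) + (β : ℂ) + 1) j /
      pochC ((α : ℂ) - s + 1) j) 0 := by
  refine DifferentiableAt.div (poch_diff _ (by fun_prop) j 0) (poch_diff _ (by fun_prop) j 0) ?_
  rw [pochC, Finset.prod_ne_zero_iff]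
  intro i hi
  have hi : i < j := by simpa using hi
  have : (α + 1 + i : ℤ) ≠ 0 := by omega
  rw [sub_zero]
  exact_mod_cast this

lemma deriv_phiH (α β : ℤ) (N : ℂ) (u n : ℕ) (hu : (u : ℤ) ≤ -α - 1)
    (hmax : max u (-α - β - (u : ℤ) - 1).toNat = n) (x : ℂ) :
    deriv (fun s : ℂ => phiHC α β N u s x) 0 =
      pochC ((α : ℂ) + 1) n * pochC (-N) n * ∑ j ∈ Finset.range (u + 1),
        (pochC (-(u : ℂ)) j * pochC (-x) j / (pochC (-N) j * (j.factorial : ℂ))) * dj α β u j := by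
  unfold phiHC
  rw [hmax, deriv_const_mul_field]
  congr 1
  have : ∀ s : ℂ, ∑ j ∈ Finset.range (u + 1),
      pochC (-(u : ℂ)) j * pochC ((u : ℂ) - s + (α : ℂ) + (β : ℂ) + 1) j * pochC (-x) j /
        (pochC ((α : ℂ) - s + 1) j * pochC (-N) j * (j.factorial : ℂ)) =
      ∑ j ∈ Finset.range (u + 1),
        (pochC (-(u : ℂ)) j * pochC (-x) j / (pochC (-N) j * (j.factorial : ℂ))) *
        (pochC ((u : ℂ) - s + (α : ℂ) + (β : ℂ) + 1) j / pochC ((α : ℂ) - s + 1) j) := by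
    intro s
    refine Finset.sum_congr rfl fun j _ => ?_
    simp only [div_eq_mul_inv, mul_inv]; ring
  simp only [this]
  rw [deriv_fun_sum]
  · exact Finset.sum_congr rfl fun j _ => by rw [deriv_const_mul_field, dj]
  · intro j hj
    exact (q_diff α β u j hu (by simp at hj; omega)).const_mul _

lemma deriv_phiJ (α β : ℤ) (u n : ℕ) (hu : (u : ℤ) ≤ -α - 1)
    (hmax : max u (-α - β - (u : ℤ) - 1).toNat = n) (x : ℂ) :
    deriv (fun s : ℂ => phiJC α β u s x) 0 =
      pochC ((α : ℂ) + 1) n / (n.factorial : ℂ) * ∑ j ∈ Finset.range (u + 1),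
        (pochC (-(u : ℂ)) j * ((1 - x) / 2) ^ j / (j.factorial : ℂ)) * dj α β u j := by
  have hfac : max u.factorial (-α - β - (u : ℤ) - 1).toNat.factorial = n.factorial := by
    rw [← hmax, Nat.monotone_factorial.map_max]
  unfold phiJC
  rw [hfac, hmax, deriv_const_mul_field]
  congr 1
  have : ∀ s : ℂ, ∑ j ∈ Finset.range (u + 1),
      pochC (-(u : ℂ)) j * pochC ((u : ℂ) - s + (α : ℂ) + (β : ℂ) + 1) j /
          (pochC ((α : ℂ) - s + 1) j * (j.factorial : ℂ)) * ((1 - x) / 2) ^ j =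
      ∑ j ∈ Finset.range (u + 1),
        (pochC (-(u : ℂ)) j * ((1 - x) / 2) ^ j / (j.factorial : ℂ)) *
        (pochC ((u : ℂ) - s + (α : ℂ) + (β : ℂ) + 1) j / pochC ((α : ℂ) - s + 1) j) := by
    intro s
    refine Finset.sum_congr rfl fun j _ => ?_
    simp only [div_eq_mul_inv, mul_inv]; ring
  simp only [this]
  rw [deriv_fun_sum]
  · exact Finset.sum_congr rfl fun j _ => by rw [deriv_const_mul_field, dj]
  · intro j hj
    exact (q_diff α β u j hu (by simp at hj; omega)).const_mul _

lemma CC_NN (c : ℂ) : CC (fun N _ => (-(N : ℂ) + c) / (N : ℂ)) (fun _ => -1) :=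
  ((CC.const (-1)).add (CC.cinv c)).congr' (fun N hN x => by
    have hN : (N : ℂ) ≠ 0 := by exact_mod_cast hN.ne'
    field_simp) (fun x => by simp)

lemma CC_XX (c : ℂ) : CC (fun N x => ((1 - x) * (N : ℂ) / 2 + c) / (N : ℂ))
    (fun x => (1 - x) / 2) :=
  ((CC.fn (g := fun x => (1 - x) / 2) (by fun_prop)).add (CC.cinv c)).congr' (fun N hN x => by
    have hN : (N : ℂ) ≠ 0 := by exact_mod_cast hN.ne'
    field_simp) (fun x => by simp)

lemma CC_nX : CC (fun N x => -((1 - x) * (N : ℂ) / 2) / (N : ℂ))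
    (fun x => -((1 - x) / 2)) :=
  ((CC.const (-1)).mul (CC_XX 0)).congr' (fun N hN x => by ring) (fun x => by ring)

lemma CC_caseH (α β : ℤ) (u n : ℕ) (hu : (u : ℤ) ≤ -α - 1)
    (hmax : max u (-α - β - (u : ℤ) - 1).toNat = n) :
    CC (fun N x => deriv (fun s : ℂ => phiHC α β (N : ℂ) u s ((1 - x) * (N : ℂ) / 2)) 0 /
        (N : ℂ) ^ n)
      (fun x => (-1) ^ n * n.factorial * deriv (fun s : ℂ => phiJC α β u s x) 0) := by
  simp only [deriv_phiH α β _ u n hu hmax, deriv_phiJ α β u n hu hmax]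
  have hN0 : CC (fun N _ => -(N : ℂ) / (N : ℂ)) (fun _ => -1) :=
    (CC_NN 0).congr' (fun N _ x => by simp) (fun _ => rfl)
  have := ((CC.const (pochC ((α : ℂ) + 1) n)).mul (hN0.poch n)).mul
    (CC.sum (Finset.range (u + 1)) fun j _ =>
      ((CC.const (pochC (-(u : ℂ)) j)).mul ((CC_nX.poch j).div (hN0.poch j)
        (fun _ => pow_ne_zero _ (by norm_num)))).mul
        (CC.const ((j.factorial : ℂ)⁻¹ * dj α β u j)))
  refine this.congr' (fun N hN x => ?_) (fun x => ?_)
  · have hN : (N : ℂ) ≠ 0 := by exact_mod_cast hN.ne'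
    have e : ∀ j : ℕ, pochC (-((1 - x) * (N : ℂ) / 2)) j / (N : ℂ) ^ j /
        (pochC (-(N : ℂ)) j / (N : ℂ) ^ j) =
        pochC (-((1 - x) * (N : ℂ) / 2)) j / pochC (-(N : ℂ)) j := fun j => by
      rw [div_div_div_cancel_right₀ (pow_ne_zero _ hN)]
    simp only [e]
    rw [← mul_div_assoc, ← mul_div_right_comm]
    congr 2
    refine Finset.sum_congr rfl fun j _ => ?_
    simp only [div_eq_mul_inv, mul_inv]; ring
  · have h0 : (n.factorial : ℂ) ≠ 0 := by exact_mod_cast n.factorial_ne_zero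
    have e : ∀ j : ℕ, (-((1 - x) / 2)) ^ j / (-1 : ℂ) ^ j = ((1 - x) / 2) ^ j := fun j => by
      rw [← div_pow]; congr 1; ring
    simp only [e]
    rw [← mul_assoc]
    congr 1
    · field_simp
    · refine Finset.sum_congr rfl fun j _ => ?_
      simp only [div_eq_mul_inv]; ring

lemma hahn_diff (a b N : ℂ) (n : ℕ) : Differentiable ℂ (hahnC a b N n) := by
  unfold hahnC pochC; fun_prop

lemma ceil_iff (α β : ℤ) (n : ℕ) :
    ⌈((-α - β : ℤ) : ℚ) / 2⌉ ≤ (n : ℤ) ↔ -α - β ≤ 2 * (n : ℤ) := by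
  rw [Int.ceil_le, div_le_iff₀ (by norm_num)]
  constructor
  · intro h
    have : ((-α - β : ℤ) : ℚ) ≤ ((n * 2 : ℤ) : ℚ) := by push_cast at h ⊢; exact h
    have : -α - β ≤ (n : ℤ) * 2 := by exact_mod_cast this
    linarith
  · intro h
    have : -α - β ≤ (n : ℤ) * 2 := by linarith
    exact_mod_cast this

lemma Hhat_diff (α β : ℤ) (hβ : β ≤ -1) (M : ℕ → ℝ) (N : ℂ) (n : ℕ) :
    Differentiable ℂ (HhatC α β N M n) := by
  unfold HhatC
  simp only [ceil_iff]
  split_ifs with h1 h2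
  · simp only [deriv_phiH α β N n n (by omega) (by omega),
      deriv_phiH α β N (-α - β - (n : ℤ) - 1).toNat n (by omega) (by omega)]
    unfold pochC
    fun_prop
  · have := hahn_diff (α : ℂ) β N ((-α - β - (n : ℤ) - 1).toNat)
    have h' := hahn_diff (-α : ℂ) β (α + N) ((α + (n : ℤ)).toNat)
    have : Differentiable ℂ (fun x => hahnC (-α : ℂ) β (α + N) ((α + (n : ℤ)).toNat) (x + α)) :=
      h'.comp (by fun_prop : Differentiable ℂ fun x : ℂ => x + (α : ℂ))
    unfold pochC
    fun_prop
  · exact hahn_diff _ _ _ _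

lemma Hhat_CC (α β : ℤ) (hαβ : α ≤ β) (hβ : β ≤ -1) (M : ℕ → ℝ) (n : ℕ) :
    CC (fun N x => HhatC α β (N : ℂ) M n ((1 - x) * (N : ℂ) / 2) / (N : ℂ) ^ n)
      (fun x => (-1) ^ n * n.factorial * PhatC α β M n x) := by
  unfold HhatC PhatC
  simp only [ceil_iff]
  have hX : CC (fun N x => ((1 - x) * (N : ℂ) / 2) / (N : ℂ)) (fun x => (1 - x) / 2) :=
    (CC_XX 0).congr' (fun N _ x => by simp) (fun _ => rfl)
  have hA : ∀ c : ℂ, CC (fun N x => (c + (N : ℂ)) / (N : ℂ)) (fun _ => 1) := fun c =>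
    ((CC.const (-1)).mul (CC_NN (-c))).congr' (fun N _ x => by ring) (fun x => by ring)
  split_ifs with h1 h2
  · refine ((CC_caseH α β n n (by omega) (by omega)).sub
      (CC_caseH α β (-α - β - (n : ℤ) - 1).toNat n (by omega) (by omega))).congr'
      (fun N _ x => by ring) (fun x => by ring)
  · have hn0 : (n.factorial : ℂ) ≠ 0 := by exact_mod_cast n.factorial_ne_zero
    rw [add_comm β (n : ℤ), add_comm α (n : ℤ)]
    obtain ⟨p, hp⟩ : ∃ p, p = (-α).toNat := ⟨_, rfl⟩
    obtain ⟨q, hq⟩ : ∃ q, q = ((n : ℤ) + α).toNat := ⟨_, rfl⟩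
    obtain ⟨r, hr⟩ : ∃ r, r = (-α - β - (n : ℤ) - 1).toNat := ⟨_, rfl⟩
    obtain ⟨t, ht⟩ : ∃ t, t = (2 * (n : ℤ) + α + β + 1).toNat := ⟨_, rfl⟩
    rw [← hp, ← hq, ← hr, ← ht]
    have hpq : n = p + q := by omega
    have hrt : n = t + r := by omega
    have T1 := (CC_nX.poch p).mul (CC.hahn (-(α : ℂ)) β q (hA α) (CC_XX α))
    have hN' : CC (fun N x => (-(N : ℂ) - (α : ℂ) - (β : ℂ) - (n : ℂ) - 1) / (N : ℂ))
        (fun _ => -1) := (CC_NN (-α - β - n - 1)).congr' (fun N _ x => by ring) (fun _ => rfl)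
    have T2 := (hN'.poch t).mul (CC.hahn (α : ℂ) β r
      ((hA 0).congr' (G' := fun N x => (N : ℂ) / N) (fun N _ x => by simp) (fun _ => rfl)) hX)
    have := (CC.const ((-1 : ℂ) ^ ((n : ℤ) + β) * (((n : ℤ) + β).toNat.factorial : ℂ))).mul
      (((CC.const (r.factorial : ℂ)).mul T1).add
      ((CC.const ((q.factorial : ℂ) / ((M q : ℂ) - 1))).mul T2))
    refine this.congr' (fun N hN x => ?_) (fun x => ?_)
    · have e1 : (N : ℂ) ^ n = N ^ p * N ^ q := by rw [hpq, pow_add]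
      have e2 : (N : ℂ) ^ n = N ^ t * N ^ r := by rw [← pow_add, ← hrt]
      rw [mul_div_assoc _ _ ((N : ℂ) ^ n), add_div]
      congr 2
      · rw [e1]; simp only [div_eq_mul_inv, mul_inv]; ring
      · rw [e2]; simp only [div_eq_mul_inv, mul_inv]; ring
    · have e1 : (-1 : ℂ) ^ n = (-1) ^ p * (-1) ^ q := by rw [hpq, pow_add]
      have e2 : (-1 : ℂ) ^ n = (-1) ^ t * (-1) ^ r := by rw [← pow_add, ← hrt]
      rw [neg_pow ((1 - x) / 2) p]
      trans (-1) ^ n * ((-1 : ℂ) ^ ((n : ℤ) + β) * (((n : ℤ) + β).toNat.factorial : ℂ)) *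
        (r.factorial * q.factorial) * (((1 - x) / 2) ^ p * jacobiC (-(α : ℂ)) β q x +
          ((M q : ℂ) - 1)⁻¹ * jacobiC α β r x)
      · rw [mul_add _ (((1 - x) / 2) ^ p * _), mul_add]
        congr 1
        · rw [e1]; ring
        · rw [e2]; ring
      · field_simp
        ring
  · exact CC.hahn _ _ _ ((hA 0).congr' (G' := fun N x => (N : ℂ) / N)
      (fun N _ x => by simp) (fun _ => rfl)) hX

lemma sum_elemOf {R : Type*} [CommMonoid R] (F : Finset ℕ) (g : ℕ → R) :
    ∏ k, g (elemOf F k) = ∏ f ∈ F, g f := by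
  rw [← Finset.prod_coe_sort F]
  exact Equiv.prod_comp (F.orderIsoOfFin rfl).toEquiv (fun f : {x // x ∈ F} => g f)

lemma le_elemOf (F : Finset ℕ) (hFpos : ∀ f ∈ F, 0 < f) (i : ℕ) (hi : i < F.card) :
    i + 1 ≤ elemOf F ⟨i, hi⟩ := by
  induction i with
  | zero => exact hFpos _ (F.orderIsoOfFin rfl ⟨0, hi⟩).2
  | succ i ih =>
    have h1 := ih (by omega)
    have h2 : elemOf F ⟨i, by omega⟩ < elemOf F ⟨i + 1, hi⟩ := by
      have : (F.orderIsoOfFin rfl) ⟨i, by omega⟩ < (F.orderIsoOfFin rfl) ⟨i + 1, hi⟩ :=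
        (F.orderIsoOfFin rfl).strictMono (by simp [Fin.lt_def])
      exact this
    omega

lemma sum_fin (m : ℕ) : ∑ i : Fin m, (i : ℕ) = m.choose 2 := by
  rw [Fin.sum_univ_eq_sum_range (fun i => i) m, Finset.sum_range_id, Nat.choose_two_right]

lemma choose_le_sum (F : Finset ℕ) (hFpos : ∀ f ∈ F, 0 < f) :
    (F.card + 1).choose 2 ≤ ∑ f ∈ F, f := by
  have h : ∑ k, elemOf F k = ∑ f ∈ F, f := by
    rw [← Finset.sum_coe_sort F (fun f => f)]
    exact Equiv.sum_comp (F.orderIsoOfFin rfl).toEquiv (fun f : {x // x ∈ F} => (f : ℕ))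
  rw [← h, ← sum_fin, Fin.sum_univ_succ]
  simp only [Fin.val_zero, zero_add, Fin.val_succ]
  exact Finset.sum_le_sum fun i _ => le_elemOf F hFpos i i.2

/-- the exceptional Jacobi polynomials as limits of the exceptional Hahn
polynomials, uniformly on compact subsets of `ℂ`. -/
theorem exceptional_hahn_to_jacobi_limit
    (α β : ℤ) (M : ℕ → ℝ) (F : Finset ℕ)
    (hαβ : α ≤ β) (hβ : β ≤ -1)
    (hM : ∀ i, M i ≠ 0 ∧ M i ≠ 1)
    (hFpos : ∀ f ∈ F, 0 < f)
    (hFc : ∀ k : ℕ, -β ≤ (k : ℤ) → (k : ℤ) ≤ -α - β - 1 → k ∈ F)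
    (n : ℕ) (hn : inSigma F n) (K : Set ℂ) (hK : IsCompact K) :
    TendstoUniformlyOn
      (fun (N : ℝ) (x : ℂ) => exHahnC α β (N : ℂ) M F n ((1 - x) * (N : ℂ) / 2) / (N : ℂ) ^ n)
      (fun x : ℂ =>
        ((-1 : ℂ) ^ n * 2 ^ (F.card + 1).choose 2 * ((n - uF F).factorial : ℂ) *
            ∏ f ∈ F, (f.factorial : ℂ)) * exJacobiC α β M F n x)
      Filter.atTop K := by
  obtain ⟨hn1, -⟩ := hn
  have hle := choose_le_sum F hFpos
  have huF : uF F + (F.card + 1).choose 2 = ∑ f ∈ F, f := by unfold uF; omega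
  set C := (F.card + 1).choose 2 with hC
  let f : Fin (F.card + 1) → ℕ := Fin.cases (n - uF F) (elemOf F)
  have hfsum : ∑ i, f i = n + C := by
    rw [Fin.sum_univ_succ]
    have : ∑ k, elemOf F k = ∑ f ∈ F, f := by
      rw [← Finset.sum_coe_sort F (fun f => f)]
      exact Equiv.sum_comp (F.orderIsoOfFin rfl).toEquiv (fun f : {x // x ∈ F} => (f : ℕ))
    simp only [f, Fin.cases_zero, Fin.cases_succ]
    omega
  have hffac : ∏ i, ((f i).factorial : ℂ) =
      ((n - uF F).factorial : ℂ) * ∏ f ∈ F, (f.factorial : ℂ) := by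
    rw [Fin.prod_univ_succ, ← sum_elemOf F (fun k => (k.factorial : ℂ))]
    simp only [f, Fin.cases_zero, Fin.cases_succ]
  have hpow : ∀ z : ℂ, ∏ j : Fin (F.card + 1), z ^ (j : ℕ) = z ^ C := fun z => by
    rw [Finset.prod_pow_eq_pow_sum, sum_fin]
  have hH : ∀ (N x : ℂ), exHahnC α β N M F n x = Matrix.det (Matrix.of
      fun i j : Fin (F.card + 1) => HhatC α β N M (f i) (x + ((j : ℕ) : ℂ))) := by
    intro N x
    unfold exHahnC
    congr 2
    ext i j
    refine Fin.cases ?_ (fun k => ?_) i <;> simp [f]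
  have hJ : ∀ x : ℂ, exJacobiC α β M F n x = Matrix.det (Matrix.of
      fun i j : Fin (F.card + 1) => iteratedDeriv (j : ℕ) (PhatC α β M (f i)) x) := by
    intro x
    unfold exJacobiC
    congr 2
    ext i j
    refine Fin.cases ?_ (fun k => ?_) i <;> simp [f]
  let G : Fin (F.card + 1) → ℝ → ℂ → ℂ := fun i N x =>
    HhatC α β (N : ℂ) M (f i) ((1 - x) * (N : ℂ) / 2) / (N : ℂ) ^ (f i)
  have hGd : ∀ i N, Differentiable ℂ (G i N) := by
    intro i N
    have h := Hhat_diff α β hβ M (N : ℂ) (f i)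
    have : Differentiable ℂ (fun x : ℂ => HhatC α β (N : ℂ) M (f i) ((1 - x) * (N : ℂ) / 2)) :=
      h.comp (by fun_prop : Differentiable ℂ fun x : ℂ => (1 - x) * (N : ℂ) / 2)
    exact this.div_const _
  have hGc : ∀ i, CC (G i) (fun x => (-1) ^ (f i) * (f i).factorial * PhatC α β M (f i) x) :=
    fun i => Hhat_CC α β hαβ hβ M (f i)
  have hdet := CC.det (fun i j : Fin (F.card + 1) => (CC.TT_iter (hGd i) (hGc i) (j : ℕ)).2)
  refine CC.unif ?_ hK
  refine hdet.congr' (fun N hN x => ?_) (fun x => ?_)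
  · have hN0 : (N : ℂ) ≠ 0 := by exact_mod_cast hN.ne'
    have := det_shift (F.card + 1) N hN (fun i => G i N) (fun i => HhatC α β (N : ℂ) M (f i)) f
      (fun i x => by simp only [G]; field_simp) x
    rw [hpow, Finset.prod_pow_eq_pow_sum, hfsum, pow_add] at this
    rw [hH, eq_div_iff (pow_ne_zero _ hN0)]
    apply mul_right_cancel₀ (pow_ne_zero C hN0)
    rw [this]; ring
  · simp only [iteratedDeriv_const_mul_field]
    have h1 := Matrix.det_mul_column (fun i => (-1 : ℂ) ^ (f i) * (f i).factorial)
      (Matrix.of fun i j : Fin (F.card + 1) =>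
        (-2 : ℂ) ^ (j : ℕ) * (Matrix.of fun i j : Fin (F.card + 1) =>
          iteratedDeriv (j : ℕ) (PhatC α β M (f i)) x) i j)
    rw [Matrix.det_mul_row, hpow, Finset.prod_mul_distrib, Finset.prod_pow_eq_pow_sum, hfsum,
      hffac, ← hJ] at h1
    have h2 : (-1 : ℂ) ^ (n + C) * (-2) ^ C = (-1) ^ n * 2 ^ C := by
      rw [pow_add, mul_assoc, ← mul_pow]; norm_num
    trans (-1 : ℂ) ^ (n + C) * (((n - uF F).factorial : ℂ) * ∏ f ∈ F, (f.factorial : ℂ)) *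
      ((-2) ^ C * exJacobiC α β M F n x)
    · rw [← h1]
      congr 2
      ext i j
      simp only [Matrix.of_apply]
      ring
    · linear_combination (((n - uF F).factorial : ℂ) * (∏ f ∈ F, (f.factorial : ℂ)) *
        exJacobiC α β M F n x) * h2
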